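/- arXiv:2105.12636 — 2 statements merged into one kernel-verified Lean document; each statement's English description precedes it below -/
import Mathlib

section
/- Assume F is even and F(s₀) ≠ 0 for some s₀ ∈ ℝ. Let B₁ ⊂ ℝ^N be the unit ball centered at the origin, 𝓕 the strict fundamental domain of G, and define w₀(x) = s₀ Σ_{g∈G} ψ(g) χ_{B₁∩𝓕}(g^{-1}x), where χ denotes the characteristic function. Then w₀ is G-equivariant, i.e. w₀(ḡ^{-1}x) = ψ(ḡ) w₀(x) for every ḡ ∈ G, and Q(w₀) = F(s₀)² Q(χ_{B₁}) = F(s₀)² ∫_{B₁}∫_{B₁} A_α |x−y|^{α−N} dx dy > 0. -/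
open MeasureTheory Real Filter Topology Set
open scoped RealInnerProductSpace ENNReal

noncomputable section

/-- Euclidean space `ℝ^N`. -/
abbrev Euc (N : ℕ) : Type := EuclideanSpace ℝ (Fin N)

/-- The normalisation constant `A_α` of the Riesz potential. -/
def rieszConst (N : ℕ) (α : ℝ) : ℝ :=
  Real.Gamma (((N : ℝ) - α) / 2) /
    (2 ^ α * Real.pi ^ ((N : ℝ) / 2) * Real.Gamma (α / 2))

/-- The Riesz kernel `I_α(x) = A_α |x|^(α - N)`. -/
def rieszKernel (N : ℕ) (α : ℝ) (x : Euc N) : ℝ :=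
  rieszConst N α * ‖x‖ ^ (α - (N : ℝ))

/-- The Riesz potential `(I_α ∗ v)(x)`. -/
def rieszPot (N : ℕ) (α : ℝ) (v : Euc N → ℝ) (x : Euc N) : ℝ :=
  ∫ y, rieszKernel N α (x - y) * v y

/-- Membership in the Sobolev space `H¹(ℝ^N)`: the function and its gradient are
square integrable. -/
def MemH1 (N : ℕ) (u : Euc N → ℝ) : Prop :=
  MemLp u 2 (volume : Measure (Euc N)) ∧
    MemLp (fun x => gradient u x) 2 (volume : Measure (Euc N))

/-- The `H¹` inner product. -/
def H1inner (N : ℕ) (u v : Euc N → ℝ) : ℝ :=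
  ∫ x, (⟪gradient u x, gradient v x⟫ + u x * v x)

/-- The `H¹` norm. -/
def H1norm (N : ℕ) (u : Euc N → ℝ) : ℝ :=
  Real.sqrt (H1inner N u u)

/-- The nonlocal term `Q(u) = ∫ (I_α ∗ F(u)) F(u)`. -/
def Qterm (N : ℕ) (α : ℝ) (F : ℝ → ℝ) (u : Euc N → ℝ) : ℝ :=
  ∫ x, rieszPot N α (fun y => F (u y)) x * F (u x)

/-- The energy functional of the Choquard equation. -/
def energy (N : ℕ) (α : ℝ) (F : ℝ → ℝ) (u : Euc N → ℝ) : ℝ :=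
  (1 / 2) * (∫ x, (‖gradient u x‖ ^ 2 + u x ^ 2)) - (1 / 2) * Qterm N α F u

/-- The Pohozaev functional. -/
def pohozaev (N : ℕ) (α : ℝ) (F : ℝ → ℝ) (u : Euc N → ℝ) : ℝ :=
  (((N : ℝ) - 2) / 2) * (∫ x, ‖gradient u x‖ ^ 2)
    + ((N : ℝ) / 2) * (∫ x, u x ^ 2)
    - (((N : ℝ) + α) / 2) * Qterm N α F u

/-- The action of the derivative `E'(u)` on a test function `φ`. -/
def energyDeriv (N : ℕ) (α : ℝ) (F : ℝ → ℝ) (u φ : Euc N → ℝ) : ℝ :=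
  (∫ x, (⟪gradient u x, gradient φ x⟫ + u x * φ x))
    - ∫ x, rieszPot N α (fun y => F (u y)) x * deriv F (u x) * φ x

/-- `u` is a weak solution of the Choquard equation `-Δu + u = (I_α ∗ F(u)) f(u)`,
with `f = F'`. -/
def IsWeakSolution (N : ℕ) (α : ℝ) (F : ℝ → ℝ) (u : Euc N → ℝ) : Prop :=
  ∀ φ : Euc N → ℝ, ContDiff ℝ (⊤ : ℕ∞) φ → HasCompactSupport φ →
    energyDeriv N α F u φ = 0

/-- `u` is nontrivial: not almost everywhere zero. -/
def Nontriv (N : ℕ) (u : Euc N → ℝ) : Prop :=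
  ¬ u =ᵐ[(volume : Measure (Euc N))] (fun _ => 0)

/-- Assumption (F0): `F(s₀) ≠ 0` for some `s₀`. -/
def CondF0 (F : ℝ → ℝ) : Prop := ∃ s₀ : ℝ, F s₀ ≠ 0

/-- Assumption (F1): `lim_{s → 0} f(s)/s = μ ∈ [0, ∞)`, `f = F'`. -/
def CondF1 (F : ℝ → ℝ) : Prop :=
  ∃ μ : ℝ, 0 ≤ μ ∧ Tendsto (fun s => deriv F s / s) (𝓝[≠] (0 : ℝ)) (𝓝 μ)

/-- Assumption (F2): subcritical growth of `F` at infinity. -/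
def CondF2 (N : ℕ) (α : ℝ) (F : ℝ → ℝ) : Prop :=
  (3 ≤ N →
    Tendsto (fun s => F s / |s| ^ (((N : ℝ) + α) / ((N : ℝ) - 2)))
      (cocompact ℝ) (𝓝 0)) ∧
  (N = 2 → ∃ p : ℝ, 2 ≤ p ∧
    Tendsto (fun s => F s / |s| ^ p) (cocompact ℝ) (𝓝 0))

/-- Assumption (F1′): `lim_{s → 0⁺} f(s)/s^{r-1} = μ ∈ [0, ∞)` for some `r > 2`, and
`s ↦ f(s)/|s|` is increasing on `ℝ ∖ {0}`. -/
def CondF1' (F : ℝ → ℝ) : Prop :=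
  (∃ r : ℝ, 2 < r ∧ ∃ μ : ℝ, 0 ≤ μ ∧
    Tendsto (fun s => deriv F s / s ^ (r - 1)) (𝓝[>] (0 : ℝ)) (𝓝 μ)) ∧
  StrictMonoOn (fun s => deriv F s / |s|) {s : ℝ | s ≠ 0}

/-- Assumption (F2′): `lim_{|s| → ∞} F(s)/|s|^p = 0` for some `p ∈ (2, (N+α)/(N-2))`
(`(N+α)/(N-2) = ∞` when `N = 2`). -/
def CondF2' (N : ℕ) (α : ℝ) (F : ℝ → ℝ) : Prop :=
  ∃ p : ℝ, 2 < p ∧ (3 ≤ N → p < ((N : ℝ) + α) / ((N : ℝ) - 2)) ∧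
    Tendsto (fun s => F s / |s| ^ p) (cocompact ℝ) (𝓝 0)

/-- A finite Coxeter group of rank `k` acting on `ℝ^N = ℝ^k × ℝ^{N-k}` by reflections,
together with the sign character `ψ` (the unique epimorphism onto `{±1}` sending each
Coxeter generator to `-1`) and the strict fundamental domain property of the closed
chamber `{x | ∀ s ∈ S, ⟪x, vec s⟫ ≥ 0}`. -/
structure CoxeterAction (N k : ℕ) where
  G : Subgroup (Euc N ≃ₗᵢ[ℝ] Euc N)
  S : Finset (Euc N ≃ₗᵢ[ℝ] Euc N)
  finiteG : (G : Set (Euc N ≃ₗᵢ[ℝ] Euc N)).Finite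
  rank_eq : S.card = k
  S_subset : (S : Set (Euc N ≃ₗᵢ[ℝ] Euc N)) ⊆ (G : Set (Euc N ≃ₗᵢ[ℝ] Euc N))
  gen : Subgroup.closure (S : Set (Euc N ≃ₗᵢ[ℝ] Euc N)) = G
  vec : (Euc N ≃ₗᵢ[ℝ] Euc N) → Euc N
  vec_norm : ∀ s ∈ S, ‖vec s‖ = 1
  vec_coord : ∀ s ∈ S, ∀ i : Fin N, k ≤ (i : ℕ) → vec s i = 0
  refl_eq : ∀ s ∈ S, ∀ x : Euc N, s x = x - (2 * ⟪x, vec s⟫) • vec s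
  ψ : (Euc N ≃ₗᵢ[ℝ] Euc N) → ℝ
  ψ_mul : ∀ g ∈ G, ∀ h ∈ G, ψ (g * h) = ψ g * ψ h
  ψ_gen : ∀ s ∈ S, ψ s = -1
  ψ_pm : ∀ g ∈ G, ψ g = 1 ∨ ψ g = -1
  isFund : ∀ x : Euc N, ∃! y : Euc N,
    (∀ s ∈ S, 0 ≤ ⟪y, vec s⟫) ∧ ∃ g ∈ G, g x = y

/-- The symmetric subspace `H_G ⊆ H¹(ℝ^N)` of `G`-equivariant functions. -/
def MemHG {N k : ℕ} (C : CoxeterAction N k) (u : Euc N → ℝ) : Prop :=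
  MemH1 N u ∧ ∀ g ∈ C.G, ∀ x : Euc N, u (g⁻¹ x) = C.ψ g * u x

/-- `H_G` as a set of functions. -/
def HGset {N k : ℕ} (C : CoxeterAction N k) : Set (Euc N → ℝ) := {u | MemHG C u}

/-- `H¹(ℝ^N)` as a set of functions. -/
def H1set (N : ℕ) : Set (Euc N → ℝ) := {u | MemH1 N u}

/-- Continuity of a path of functions with respect to the `H¹` distance, on a set
of parameters. -/
def H1ContOn (N : ℕ) (γ : ℝ → Euc N → ℝ) (A : Set ℝ) : Prop :=
  ∀ t ∈ A, ∀ ε > 0, ∃ δ > 0, ∀ t' ∈ A, |t' - t| < δ →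
    H1norm N (fun x => γ t' x - γ t x) < ε

/-- The mountain pass level of the Choquard energy over a class `X` of functions:
the infimum, over `H¹`-continuous paths in `X` joining `0` to a function of negative
energy, of the maximum of the energy along the path. -/
def mpLevel (N : ℕ) (α : ℝ) (F : ℝ → ℝ) (X : Set (Euc N → ℝ)) : ℝ :=
  sInf { c : ℝ | ∃ γ : ℝ → Euc N → ℝ,
    (∀ t ∈ Icc (0 : ℝ) 1, γ t ∈ X) ∧
    H1ContOn N γ (Icc 0 1) ∧
    γ 0 = (fun _ => 0) ∧
    energy N α F (γ 1) < 0 ∧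
    c = sSup ((fun t => energy N α F (γ t)) '' Icc (0 : ℝ) 1) }

/-- The mountain pass level `c_G` over the symmetric subspace `H_G`. -/
def cG {N k : ℕ} (α : ℝ) (F : ℝ → ℝ) (C : CoxeterAction N k) : ℝ :=
  mpLevel N α F (HGset C)

/-- The strict fundamental domain (closed chamber) of the Coxeter group. -/
def fund {N k : ℕ} (C : CoxeterAction N k) : Set (Euc N) :=
  {x | ∀ s ∈ C.S, 0 ≤ ⟪x, C.vec s⟫}

/-- The facet `∂^i 𝓕`: points of the chamber lying on exactly `i` walls. -/
def facet {N k : ℕ} (C : CoxeterAction N k) (i : ℕ) : Set (Euc N) :=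
  {q | q ∈ fund C ∧
    {s | s ∈ C.S ∧ ⟪q, C.vec s⟫ = 0}.ncard = i}

/-- The symmetric class associated with the isotropy subgroup `S_q = {g ∈ G : g q = q}`. -/
def stabSet {N k : ℕ} (C : CoxeterAction N k) (q : Euc N) : Set (Euc N → ℝ) :=
  {u | MemH1 N u ∧ ∀ g ∈ C.G, g q = q → ∀ x : Euc N, u (g⁻¹ x) = C.ψ g * u x}

/-- The mountain pass level `c_{S_q}` associated with the isotropy subgroup of `q`. -/
def cStab {N k : ℕ} (α : ℝ) (F : ℝ → ℝ) (C : CoxeterAction N k) (q : Euc N) : ℝ :=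
  mpLevel N α F (stabSet C q)

/-- The cardinality `|Gq|` of the orbit of `q` under `G`. -/
def orbCard {N k : ℕ} (C : CoxeterAction N k) (q : Euc N) : ℕ :=
  ((fun g : Euc N ≃ₗᵢ[ℝ] Euc N => g q) '' (C.G : Set (Euc N ≃ₗᵢ[ℝ] Euc N))).ncard


lemma etf_int_norm (N : ℕ) (α : ℝ) (hN : 2 ≤ N) (hα0 : 0 < α) :
    IntegrableOn (fun x : Euc N => ‖x‖ ^ (α - (N : ℝ))) (Metric.ball 0 2) := by
  haveI : Nontrivial (Euc N) := by
    haveI : Nonempty (Fin N) := ⟨⟨0, by omega⟩⟩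
    infer_instance
  have h := (integrable_fun_norm_addHaar (E := Euc N) volume
    (f := (Iio (2:ℝ)).indicator (fun r => r ^ (α - (N : ℝ))))).2 ?_
  · rw [← integrable_indicator_iff measurableSet_ball]
    refine h.congr (Eventually.of_forall fun x => ?_)
    by_cases hx : ‖x‖ < 2 <;> simp [indicator, hx]
  · have h1 : IntegrableOn (fun r : ℝ => r ^ (α - 1)) (Ioo 0 2) :=
      (intervalIntegral.integrableOn_Ioo_rpow_iff (by norm_num)).2 (by linarith)
    have h2 : IntegrableOn ((Iio (2:ℝ)).indicator (fun r : ℝ => r ^ (α - 1))) (Ioi 0) := by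
      rw [IntegrableOn, integrable_indicator_iff measurableSet_Iio, IntegrableOn,
        Measure.restrict_restrict measurableSet_Iio, Iio_inter_Ioi]
      exact h1
    refine h2.congr_fun (fun r hr => ?_) measurableSet_Ioi
    have hr' : 0 < r := hr
    by_cases hx : r < 2
    · simp only [indicator, mem_Iio, hx, if_true, smul_eq_mul, finrank_euclideanSpace,
        Fintype.card_fin]
      rw [← Real.rpow_natCast, ← Real.rpow_add hr']
      congr 1
      rw [Nat.cast_sub (by omega)]
      push_cast
      ring
    · simp [indicator, hx]

lemma etf_const_pos (N : ℕ) (α : ℝ) (hα0 : 0 < α) (hαN : α < (N : ℝ)) :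
    0 < rieszConst N α := by
  unfold rieszConst
  have h1 := Real.Gamma_pos_of_pos (s := ((N : ℝ) - α) / 2) (by linarith)
  have h2 := Real.Gamma_pos_of_pos (s := α / 2) (by linarith)
  positivity

lemma etf_pos (N : ℕ) (α : ℝ) (hN : 2 ≤ N) (hα0 : 0 < α) (hαN : α < (N : ℝ)) :
    0 < ∫ x in Metric.ball (0 : Euc N) 1,
        ∫ y in Metric.ball (0 : Euc N) 1, rieszKernel N α (x - y) := by
  have hA := etf_const_pos N α hα0 hαN
  haveI : Nontrivial (Euc N) := by
    haveI : Nonempty (Fin N) := ⟨⟨0, by omega⟩⟩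
    infer_instance
  have hK : IntegrableOn (rieszKernel N α) (Metric.ball 0 2) :=
    (etf_int_norm N α hN hα0).const_mul _
  have hK0 : ∀ x, 0 ≤ rieszKernel N α x := fun x => by unfold rieszKernel; positivity
  have hKm : Measurable (rieszKernel N α) := by unfold rieszKernel; fun_prop
  have hS : ∀ x : Euc N, Integrable ((Metric.ball (0 : Euc N) 2).indicator (rieszKernel N α)) :=
    fun x => (integrable_indicator_iff measurableSet_ball).2 hK
  have hT : ∀ x : Euc N, Integrable (fun y =>
      (Metric.ball (0 : Euc N) 2).indicator (rieszKernel N α) (x - y)) :=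
    fun x => (hS x).comp_sub_left x
  have hle : ∀ x ∈ Metric.ball (0 : Euc N) 1, ∀ y ∈ Metric.ball (0 : Euc N) 1,
      (Metric.ball (0 : Euc N) 2).indicator (rieszKernel N α) (x - y)
        = rieszKernel N α (x - y) := by
    intro x hx y hy
    rw [indicator_of_mem]
    rw [mem_ball_zero_iff] at *
    linarith [norm_sub_le x y]
  have hI : ∀ x ∈ Metric.ball (0 : Euc N) 1,
      IntegrableOn (fun y => rieszKernel N α (x - y)) (Metric.ball 0 1) := fun x hx =>
    (hT x).integrableOn.congr_fun (hle x hx) measurableSet_ball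
  have hb : ∀ x ∈ Metric.ball (0 : Euc N) 1,
      ∫ y in Metric.ball (0 : Euc N) 1, rieszKernel N α (x - y)
        ≤ ∫ y, (Metric.ball (0 : Euc N) 2).indicator (rieszKernel N α) y := by
    intro x hx
    rw [← setIntegral_congr_fun measurableSet_ball (hle x hx),
      ← integral_sub_left_eq_self _ volume x]
    exact setIntegral_le_integral (hT x)
      (Eventually.of_forall fun y => indicator_nonneg (fun z _ => hK0 z) _)
  have hpos : ∀ x ∈ Metric.ball (0 : Euc N) 1,
      0 < ∫ y in Metric.ball (0 : Euc N) 1, rieszKernel N α (x - y) := by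
    intro x hx
    rw [setIntegral_pos_iff_support_of_nonneg_ae
      (Eventually.of_forall fun y => hK0 _) (hI x hx)]
    have : Metric.ball (0 : Euc N) 1 \ {x} ⊆
        Function.support (fun y => rieszKernel N α (x - y)) ∩ Metric.ball 0 1 := by
      intro y hy
      refine ⟨?_, hy.1⟩
      have : 0 < ‖x - y‖ := norm_pos_iff.2 (sub_ne_zero.2 fun h => hy.2 h.symm)
      rw [Function.mem_support]
      unfold rieszKernel
      positivity
    refine lt_of_lt_of_le ?_ (measure_mono this)
    rw [measure_diff_null (measure_singleton x)]
    exact Metric.measure_ball_pos _ _ one_pos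
  have hmeas : StronglyMeasurable (fun x =>
      ∫ y in Metric.ball (0 : Euc N) 1, rieszKernel N α (x - y)) := by
    have : StronglyMeasurable (fun p : Euc N × Euc N => rieszKernel N α (p.1 - p.2)) :=
      (hKm.comp (measurable_fst.sub measurable_snd)).stronglyMeasurable
    exact this.integral_prod_right (ν := volume.restrict (Metric.ball (0 : Euc N) 1))
  have hint : IntegrableOn (fun x =>
      ∫ y in Metric.ball (0 : Euc N) 1, rieszKernel N α (x - y)) (Metric.ball 0 1) := by
    refine Measure.integrableOn_of_bounded
      (M := ∫ y, (Metric.ball (0 : Euc N) 2).indicator (rieszKernel N α) y)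
      measure_ball_lt_top.ne hmeas.aestronglyMeasurable ?_
    refine (ae_restrict_iff' measurableSet_ball).2 (Eventually.of_forall fun x hx => ?_)
    rw [Real.norm_of_nonneg (hpos x hx).le]
    exact hb x hx
  rw [setIntegral_pos_iff_support_of_nonneg_ae
    ((ae_restrict_iff' measurableSet_ball).2 (Eventually.of_forall fun x hx => (hpos x hx).le)) hint]
  refine lt_of_lt_of_le (Metric.measure_ball_pos volume (0 : Euc N) one_pos) (measure_mono ?_)
  exact fun x hx => ⟨(hpos x hx).ne', hx⟩

lemma etf_fix_null {N : ℕ} (g : Euc N ≃ₗᵢ[ℝ] Euc N) (hg : g ≠ 1) :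
    volume {x : Euc N | g x = x} = 0 := by
  let V : Submodule ℝ (Euc N) := LinearMap.eqLocus g.toLinearEquiv.toLinearMap LinearMap.id
  have hV : V ≠ ⊤ := by
    intro h
    apply hg
    ext1 x
    have : x ∈ V := by rw [h]; trivial
    exact this
  exact Measure.addHaar_submodule volume V hV

theorem equivariant_test_function (N k : ℕ) (α : ℝ) (F : ℝ → ℝ)
    (hN : 2 ≤ N) (hα0 : 0 < α) (hαN : α < (N : ℝ))
    (hk1 : 1 ≤ k) (hkN : k ≤ N) (C : CoxeterAction N k)
    (hFeven : ∀ s : ℝ, F (-s) = F s) (hF00 : F 0 = 0)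
    (s₀ : ℝ) (hs₀ : F s₀ ≠ 0)
    (w₀ : Euc N → ℝ)
    (hw₀ : ∀ x : Euc N, w₀ x =
      s₀ * ∑ᶠ g ∈ (C.G : Set (Euc N ≃ₗᵢ[ℝ] Euc N)),
        C.ψ g * Set.indicator (Metric.ball (0 : Euc N) 1 ∩ fund C)
          (fun _ => (1 : ℝ)) (g⁻¹ x)) :
    (∀ g ∈ C.G, ∀ x : Euc N, w₀ (g⁻¹ x) = C.ψ g * w₀ x) ∧
    Qterm N α F w₀ = F s₀ ^ 2 *
      (∫ x in Metric.ball (0 : Euc N) 1,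
        ∫ y in Metric.ball (0 : Euc N) 1, rieszKernel N α (x - y)) ∧
    0 < Qterm N α F w₀ := by
  have hequiv : ∀ g ∈ C.G, ∀ x : Euc N, w₀ (g⁻¹ x) = C.ψ g * w₀ x := by
    intro g hg x
    have hsq : C.ψ g * C.ψ g = 1 := by rcases C.ψ_pm g hg with h | h <;> rw [h] <;> norm_num
    rw [hw₀, hw₀, mul_left_comm]
    congr 1
    rw [← smul_eq_mul (C.ψ g), smul_finsum_mem C.finiteG]
    refine finsum_mem_eq_of_bijOn (fun h => g * h) ⟨?_, ?_, ?_⟩ ?_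
    · exact fun h hh => C.G.mul_mem hg hh
    · exact fun a _ b _ hab => mul_left_cancel hab
    · exact fun b hb => ⟨g⁻¹ * b, C.G.mul_mem (C.G.inv_mem hg) hb, by simp⟩
    · intro h hh
      have e : (g * h)⁻¹ x = h⁻¹ (g⁻¹ x) := by rw [mul_inv_rev]; rfl
      rw [e, C.ψ_mul g hg h hh, smul_eq_mul, ← mul_assoc, ← mul_assoc, hsq, one_mul]
  have hnull : ∀ᵐ x : Euc N, ∀ g ∈ C.G, g ≠ 1 → g x ≠ x := by
    have := (ae_ball_iff (μ := (volume : Measure (Euc N))) C.finiteG.countable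
      (p := fun x g _ => g ≠ 1 → g x ≠ x)).2 (fun g _ => by
        by_cases hg1 : g = 1
        · exact Eventually.of_forall fun x h => absurd hg1 h
        · have : ∀ᵐ x : Euc N, ¬ (g x = x) := by
            rw [ae_iff]; simpa using etf_fix_null g hg1
          filter_upwards [this] with x hx _ using hx)
    exact this
  have hF : (fun x => F (w₀ x)) =ᵐ[volume]
      (Metric.ball (0 : Euc N) 1).indicator (fun _ => F s₀) := by
    filter_upwards [hnull] with x hx
    by_cases hxb : x ∈ Metric.ball (0 : Euc N) 1
    · rw [indicator_of_mem hxb]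
      obtain ⟨y, ⟨hy, g, hg, hgy⟩, huniq⟩ := C.isFund x
      have key : w₀ x = s₀ * C.ψ g⁻¹ := by
        rw [hw₀]
        congr 1
        have hother : ∀ h ∈ C.G, h ≠ g⁻¹ → C.ψ h * Set.indicator
            (Metric.ball (0 : Euc N) 1 ∩ fund C) (fun _ => (1 : ℝ)) (h⁻¹ x) = 0 := by
          intro h hh hne
          rw [indicator_of_notMem, mul_zero]
          rintro ⟨_, h2⟩
          have e1 : h⁻¹ x = y := huniq _ ⟨h2, h⁻¹, C.G.inv_mem hh, rfl⟩
          refine hx (h * g) (C.G.mul_mem hh hg) ?_ ?_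
          · exact fun h3 => hne (eq_inv_of_mul_eq_one_left h3)
          · change h (g x) = x
            rw [hgy, ← e1]
            exact h.apply_symm_apply x
        have hself : C.ψ g⁻¹ * Set.indicator
            (Metric.ball (0 : Euc N) 1 ∩ fund C) (fun _ => (1 : ℝ)) (g⁻¹⁻¹ x) = C.ψ g⁻¹ := by
          rw [inv_inv, indicator_of_mem, mul_one]
          refine ⟨?_, ?_⟩
          · rw [mem_ball_zero_iff] at *
            rwa [LinearIsometryEquiv.norm_map]
          · rw [hgy]; exact hy
        rw [finsum_mem_eq_finite_toFinset_sum _ C.finiteG, Finset.sum_eq_single g⁻¹, hself]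
        · intro h hh hne
          exact hother h (by simpa using hh) hne
        · intro h
          exact absurd (by simpa using hg) h
      rw [key]
      rcases C.ψ_pm g⁻¹ (C.G.inv_mem hg) with h | h <;> rw [h] <;> simp [hFeven]
    · rw [indicator_of_notMem hxb, hw₀, finsum_mem_eq_zero_of_forall_eq_zero, mul_zero, hF00]
      intro h _
      rw [indicator_of_notMem, mul_zero]
      rintro ⟨h1, _⟩
      apply hxb
      rw [mem_ball_zero_iff] at *
      rwa [LinearIsometryEquiv.norm_map] at h1
  have hpot : ∀ x, rieszPot N α (fun y => F (w₀ y)) x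
      = F s₀ * ∫ y in Metric.ball (0 : Euc N) 1, rieszKernel N α (x - y) := by
    intro x
    unfold rieszPot
    rw [← integral_const_mul, ← integral_indicator measurableSet_ball]
    refine integral_congr_ae ?_
    filter_upwards [hF] with y hy
    rw [hy]
    by_cases hyb : y ∈ Metric.ball (0 : Euc N) 1
    · rw [indicator_of_mem hyb, indicator_of_mem hyb, mul_comm]
    · rw [indicator_of_notMem hyb, indicator_of_notMem hyb, mul_zero]
  have hQ : Qterm N α F w₀ = F s₀ ^ 2 *
      (∫ x in Metric.ball (0 : Euc N) 1,
        ∫ y in Metric.ball (0 : Euc N) 1, rieszKernel N α (x - y)) := by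
    unfold Qterm
    rw [← integral_const_mul, ← integral_indicator measurableSet_ball]
    refine integral_congr_ae ?_
    filter_upwards [hF] with y hy
    rw [hy, hpot]
    by_cases hyb : y ∈ Metric.ball (0 : Euc N) 1
    · rw [indicator_of_mem hyb, indicator_of_mem hyb]; ring
    · rw [indicator_of_notMem hyb, indicator_of_notMem hyb, mul_zero]
  refine ⟨hequiv, hQ, ?_⟩
  rw [hQ]
  exact mul_pos (by positivity) (etf_pos N α hN hα0 hαN)


end
end

section
/- Let N ≥ 2, α ∈ (0,N), s > 0, and ε ∈ (0, s). Suppose u : ℝ^N → ℝ is measurable with |u|^s ∈ L^1(ℝ^N), u ∈ L^∞(ℝ^N), lim_{|x|→∞} ess sup_{|y|≥|x|/2} |u(y)| = 0, and sup_{x∈ℝ^N} (I_α ∗ |u|^{s−ε})(x) < ∞. Then lim_{|x|→∞} (I_α ∗ |u|^s)(x) = 0. -/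
open MeasureTheory Real Filter Topology Set
open scoped RealInnerProductSpace ENNReal

noncomputable section

/-- Decay of the Riesz potential: if `|u|^s ∈ L¹`, `u ∈ L^∞`,
`u` decays essentially at infinity, and `I_α ∗ |u|^{s-ε}` is uniformly bounded, then
`(I_α ∗ |u|^s)(x) → 0` as `|x| → ∞`. -/
theorem riesz_potential_decay (N : ℕ) (α s ε : ℝ)
    (hN : 2 ≤ N) (hα0 : 0 < α) (hαN : α < (N : ℝ))
    (hs : 0 < s) (hε0 : 0 < ε) (hεs : ε < s)
    (u : Euc N → ℝ) (hmeas : Measurable u)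
    (hint : Integrable (fun y => |u y| ^ s) (volume : Measure (Euc N)))
    (hbdd : ∃ M : ℝ, ∀ᵐ x : Euc N ∂(volume : Measure (Euc N)), |u x| ≤ M)
    (hdecay : ∀ δ : ℝ, 0 < δ → ∃ R : ℝ,
      ∀ᵐ y : Euc N ∂(volume : Measure (Euc N)), R ≤ ‖y‖ → |u y| ≤ δ)
    (hpot : ∃ M : ℝ, ∀ x : Euc N,
      ∫⁻ y, ENNReal.ofReal (rieszKernel N α (x - y) * |u y| ^ (s - ε))
        ≤ ENNReal.ofReal M) :
    Tendsto (fun x : Euc N => rieszPot N α (fun y => |u y| ^ s) x)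
      (cocompact (Euc N)) (𝓝 0) := by
  obtain ⟨M, hM⟩ := hpot
  have hA : 0 < rieszConst N α := by
    unfold rieszConst
    have h1 : 0 < Real.Gamma (((N : ℝ) - α) / 2) := Real.Gamma_pos_of_pos (by linarith)
    have h2 : 0 < Real.Gamma (α / 2) := Real.Gamma_pos_of_pos (by linarith)
    have h3 := Real.pi_pos
    positivity
  have hK : ∀ z : Euc N, 0 ≤ rieszKernel N α z := fun z => by
    unfold rieszKernel
    positivity
  have hKm : Measurable (rieszKernel N α) := by
    unfold rieszKernel
    fun_prop
  have hg2nn : ∀ x y : Euc N, 0 ≤ rieszKernel N α (x - y) * |u y| ^ (s - ε) := fun x y =>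
    mul_nonneg (hK _) (by positivity)
  have hg2m : ∀ x : Euc N,
      Measurable (fun y => rieszKernel N α (x - y) * |u y| ^ (s - ε)) := fun x => by
    have h1 : Measurable (fun y : Euc N => rieszKernel N α (x - y)) :=
      hKm.comp (measurable_const.sub measurable_id)
    have h2 : Measurable (fun y : Euc N => |u y|) := by
      simpa [Real.norm_eq_abs] using hmeas.norm
    exact h1.mul (h2.pow_const _)
  have hg2i : ∀ x : Euc N,
      Integrable (fun y => rieszKernel N α (x - y) * |u y| ^ (s - ε)) volume := fun x => by
    refine ⟨(hg2m x).aestronglyMeasurable, ?_⟩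
    rw [hasFiniteIntegral_iff_ofReal (Eventually.of_forall (hg2nn x))]
    exact (hM x).trans_lt ENNReal.ofReal_lt_top
  have hg2b : ∀ x : Euc N,
      ∫ y, rieszKernel N α (x - y) * |u y| ^ (s - ε) ≤ max M 0 := fun x => by
    rw [integral_eq_lintegral_of_nonneg_ae (Eventually.of_forall (hg2nn x))
      (hg2m x).aestronglyMeasurable]
    have := ENNReal.toReal_mono ENNReal.ofReal_ne_top (hM x)
    rwa [ENNReal.toReal_ofReal'] at this
  set C : ℝ := ∫ y, |u y| ^ s with hC
  have hnn : ∀ x : Euc N, 0 ≤ rieszPot N α (fun y => |u y| ^ s) x := fun x =>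
    integral_nonneg fun y => mul_nonneg (hK _) (by positivity)
  have key : ∀ (δ R : ℝ), 0 < δ →
      (∀ᵐ y : Euc N ∂(volume : Measure (Euc N)), R ≤ ‖y‖ → |u y| ≤ δ) →
      ∀ x : Euc N, 0 < ‖x‖ → 2 * R ≤ ‖x‖ →
      rieszPot N α (fun y => |u y| ^ s) x ≤
        rieszConst N α * (‖x‖ / 2) ^ (α - (N : ℝ)) * C + δ ^ ε * max M 0 := by
    intro δ R hδ hR x hx0 hx
    have i1 : Integrable (fun y => rieszConst N α * (‖x‖ / 2) ^ (α - (N : ℝ)) * |u y| ^ s)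
        (volume : Measure (Euc N)) := hint.const_mul _
    have i2 := (hg2i x).const_mul (δ ^ ε)
    have h1 : rieszPot N α (fun y => |u y| ^ s) x ≤
        ∫ y, (rieszConst N α * (‖x‖ / 2) ^ (α - (N : ℝ)) * |u y| ^ s +
          δ ^ ε * (rieszKernel N α (x - y) * |u y| ^ (s - ε))) := by
      refine integral_mono_of_nonneg
        (Eventually.of_forall fun y => mul_nonneg (hK _) (by positivity)) (i1.add i2) ?_
      filter_upwards [hR] with y hy
      have hp1 : 0 ≤ rieszConst N α * (‖x‖ / 2) ^ (α - (N : ℝ)) * |u y| ^ s := by positivity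
      have hp2 : 0 ≤ δ ^ ε * (rieszKernel N α (x - y) * |u y| ^ (s - ε)) :=
        mul_nonneg (by positivity) (hg2nn x y)
      show rieszKernel N α (x - y) * |u y| ^ s ≤ _
      by_cases hc : ‖y‖ < ‖x‖ / 2
      · have hd : ‖x‖ / 2 ≤ ‖x - y‖ := by
          have := norm_sub_norm_le x y
          linarith
        have hk : ‖x - y‖ ^ (α - (N : ℝ)) ≤ (‖x‖ / 2) ^ (α - (N : ℝ)) :=
          Real.rpow_le_rpow_of_nonpos (by linarith) hd (by linarith)
        have : rieszKernel N α (x - y) * |u y| ^ s ≤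
            rieszConst N α * (‖x‖ / 2) ^ (α - (N : ℝ)) * |u y| ^ s := by
          unfold rieszKernel
          gcongr
        linarith
      · have hu : |u y| ≤ δ := hy (by linarith)
        have he : |u y| ^ s = |u y| ^ ε * |u y| ^ (s - ε) := by
          rw [← Real.rpow_add_of_nonneg (abs_nonneg _) hε0.le (by linarith)]
          congr 1
          ring
        have hl : |u y| ^ ε ≤ δ ^ ε := Real.rpow_le_rpow (abs_nonneg _) hu hε0.le
        have := mul_le_mul_of_nonneg_right hl (hg2nn x y)
        have e2 : rieszKernel N α (x - y) * |u y| ^ s =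
            |u y| ^ ε * (rieszKernel N α (x - y) * |u y| ^ (s - ε)) := by
          rw [he]
          ring
        linarith
    rw [integral_add i1 i2, integral_const_mul, integral_const_mul] at h1
    have := mul_le_mul_of_nonneg_left (hg2b x) (Real.rpow_nonneg hδ.le ε)
    linarith
  have hnorm : Tendsto (fun x : Euc N => ‖x‖) (cocompact (Euc N)) atTop :=
    tendsto_norm_cocompact_atTop
  have hfirst : Tendsto
      (fun x : Euc N => rieszConst N α * (‖x‖ / 2) ^ (α - (N : ℝ)) * C)
      (cocompact (Euc N)) (𝓝 0) := by
    have h0 := (tendsto_rpow_neg_atTop (y := (N : ℝ) - α) (by linarith)).comp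
      (hnorm.atTop_div_const (r := 2) (by norm_num))
    have h1 := (h0.const_mul (rieszConst N α)).mul_const C
    simpa [Function.comp_def, neg_sub] using h1
  rw [Metric.tendsto_nhds]
  intro η hη
  set L : ℝ := max M 0 + 1 with hL
  have hM0 : 0 ≤ max M 0 := le_max_right _ _
  have hLp : 0 < L := by positivity
  obtain ⟨R, hR⟩ := hdecay ((η / (2 * L)) ^ (1 / ε)) (by positivity)
  have hpow : ((η / (2 * L)) ^ (1 / ε)) ^ ε = η / (2 * L) := by
    rw [← Real.rpow_mul (by positivity), one_div_mul_cancel hε0.ne', Real.rpow_one]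
  filter_upwards [hnorm.eventually_gt_atTop 0, hnorm.eventually_ge_atTop (2 * R),
    hfirst.eventually_lt_const (half_pos hη)] with x hx0 hx hx1
  have h := key _ R (by positivity) hR x hx0 hx
  rw [hpow] at h
  rw [Real.dist_eq, sub_zero, abs_of_nonneg (hnn x)]
  have h2 : η / (2 * L) * max M 0 ≤ η / (2 * L) * L := by
    gcongr
    linarith
  have h3 : η / (2 * L) * L = η / 2 := by
    field_simp
  linarith
end
end
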